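/- Let X = ℓ∞³, Y = ℓ₁³, and let T : X → Y be a bounded linear operator with ‖T‖ = 1 such that M_T ∩ Ext(B_X) = {±x₁, ±x₂, ±x₃, ±x₄}. Suppose |S₁| = 4, |S₂| = 4 and |S₃| = 0. If ±J(Tx_i) = ±J(Tx_j) for all x_i, x_j ∈ S₁ and ±J(Tx_i) ⊆ ±Ext J(Tx_k) for all x_i ∈ S₁ and all x_k ∈ S₂, then T is 5-smooth, i.e., dim span J(T) = 5. -/

import Mathlib

open Metric Set Module Pointwise

noncomputable section

/-- `J x` is the set of supporting functionals of `x`. -/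
def suppFunctionals {E : Type*} [NormedAddCommGroup E] [NormedSpace ℝ E] (x : E) :
    Set (E →L[ℝ] ℝ) := {f | ‖f‖ = 1 ∧ f x = 1}

/-- ℓ∞³ : ℝ³ with the max norm. -/
abbrev Linf3 := Fin 3 → ℝ

/-- ℓ₁³ : ℝ³ with the ℓ¹ norm. -/
abbrev L13 := PiLp 1 (fun _ : Fin 3 => ℝ)

def x₁ : Linf3 := ![1, 1, 1]
def x₂ : Linf3 := ![-1, 1, 1]
def x₃ : Linf3 := ![-1, -1, 1]
def x₄ : Linf3 := ![1, -1, 1]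

/-- `M_T ∩ Ext(B_X)`: the norm-attainment set of `T` intersected with the
extreme points of the closed unit ball. -/
def MTExt (T : Linf3 →L[ℝ] L13) : Set Linf3 :=
  {x ∈ sphere (0 : Linf3) 1 | ‖T x‖ = ‖T‖} ∩ extremePoints ℝ (closedBall (0 : Linf3) 1)

/-- `Sk T k` is the set `S_k` of points `x` of `M_T ∩ Ext(B_X)` such that `T x` is
`k`-smooth. -/
def Sk (T : Linf3 →L[ℝ] L13) (k : ℕ) : Set Linf3 :=
  {x ∈ MTExt T | finrank ℝ (Submodule.span ℝ (suppFunctionals (T x))) = k}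

/-- `±A`, i.e. `A ∪ (-A)`. -/
def pm {E : Type*} [NormedAddCommGroup E] [NormedSpace ℝ E] (A : Set (E →L[ℝ] ℝ)) :
    Set (E →L[ℝ] ℝ) := A ∪ (-A)

/-- the four chosen vertices -/
def XX : Fin 4 → Linf3 := ![x₁, x₂, x₃, x₄]

/-- functional on `L13` with coefficients `g` -/
def phi (g : Fin 3 → ℝ) : L13 →L[ℝ] ℝ :=
  ∑ k, g k • (PiLp.proj 1 (fun _ : Fin 3 => ℝ) k : L13 →L[ℝ] ℝ)

lemma phi_apply (g : Fin 3 → ℝ) (y : L13) : phi g y = ∑ k, g k * y k := by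
  simp [phi]

lemma l1norm (y : L13) : ‖y‖ = ∑ k, |y k| := by
  simp [PiLp.norm_eq_of_L1]

lemma phi_norm_le (g : Fin 3 → ℝ) (hg : ∀ k, |g k| ≤ 1) : ‖phi g‖ ≤ 1 := by
  refine ContinuousLinearMap.opNorm_le_bound _ zero_le_one fun y => ?_
  rw [phi_apply, l1norm, one_mul, Real.norm_eq_abs]
  refine (Finset.abs_sum_le_sum_abs _ _).trans (Finset.sum_le_sum fun k _ => ?_)
  rw [abs_mul]
  exact mul_le_of_le_one_left (abs_nonneg _) (hg k)

lemma supp_of_le {E : Type*} [NormedAddCommGroup E] [NormedSpace ℝ E] (y : E) (f : E →L[ℝ] ℝ)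
    (hy : ‖y‖ ≤ 1) (hf : ‖f‖ ≤ 1) (h : f y = 1) : f ∈ suppFunctionals y := by
  refine ⟨le_antisymm hf ?_, h⟩
  have h2 := f.le_opNorm y
  rw [h, norm_one] at h2
  nlinarith [norm_nonneg f, norm_nonneg y]

lemma phi_supp (g : Fin 3 → ℝ) (y : L13) (hy : ‖y‖ = 1) (hg : ∀ k, |g k| ≤ 1)
    (h : ∀ k, g k * y k = |y k|) : phi g ∈ suppFunctionals y := by
  refine supp_of_le y _ hy.le (phi_norm_le g hg) ?_
  rw [phi_apply, ← hy, l1norm]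
  exact Finset.sum_congr rfl fun k _ => h k

lemma supp_coord (g : Fin 3 → ℝ) (y : L13) (hy : ‖y‖ = 1) (hg : ∀ k, |g k| ≤ 1)
    (h : phi g y = 1) (k : Fin 3) : g k * y k = |y k| := by
  have hle : ∀ k ∈ Finset.univ, g k * y k ≤ |y k| := fun k _ => by
    refine (le_abs_self _).trans ?_
    rw [abs_mul]
    exact mul_le_of_le_one_left (abs_nonneg _) (hg k)
  rw [phi_apply, ← hy, l1norm] at h
  exact (Finset.sum_eq_sum_iff_of_le hle).1 h k (Finset.mem_univ k)

/-- basis vector -/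
def bv (k : Fin 3) : L13 := WithLp.toLp 1 (Pi.single k 1)

lemma bv_apply (k j : Fin 3) : (bv k) j = if j = k then 1 else 0 := by
  simp [bv, Pi.single_apply]

lemma bv_norm (k : Fin 3) : ‖bv k‖ = 1 := by
  rw [l1norm]
  simp [bv_apply, apply_ite abs]

lemma phi_bv (g : Fin 3 → ℝ) (k : Fin 3) : phi g (bv k) = g k := by
  rw [phi_apply]; simp [bv_apply]

lemma exists_phi (f : L13 →L[ℝ] ℝ) : f = phi (fun k => f (bv k)) := by
  ext y
  rw [phi_apply]
  have : y = ∑ k, y k • bv k := by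
    ext j
    fin_cases j <;> simp [Fin.sum_univ_three, bv_apply]
  conv_lhs => rw [this]
  simp [map_sum, mul_comm]

lemma supp_bound {y : L13} {f : L13 →L[ℝ] ℝ} (hf : ‖f‖ ≤ 1) (k : Fin 3) : |f (bv k)| ≤ 1 := by
  have := f.le_opNorm (bv k)
  rw [bv_norm, mul_one] at this
  exact this.trans hf

/-- signs -/
def sg (y : L13) (k : Fin 3) : ℝ := SignType.sign (y k)

lemma sg_mul (y : L13) (k : Fin 3) : sg y k * y k = |y k| := by
  simp [sg]

lemma sg_le (y : L13) (k : Fin 3) : |sg y k| ≤ 1 := by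
  unfold sg
  rcases lt_trichotomy (y k) 0 with h | h | h <;> simp [h]

lemma sg_abs (y : L13) (k : Fin 3) (h : y k ≠ 0) : |sg y k| = 1 := by
  unfold sg
  rcases lt_or_gt_of_ne h with h | h <;> simp [h]

lemma sg_zero (y : L13) (k : Fin 3) (h : y k = 0) : sg y k = 0 := by
  simp [sg, h]

lemma sg_supp (y : L13) (hy : ‖y‖ = 1) : phi (sg y) ∈ suppFunctionals y :=
  phi_supp _ _ hy (sg_le y) (sg_mul y)

lemma sg_supp' (y : L13) (hy : ‖y‖ = 1) (k : Fin 3) (hk : y k = 0) :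
    phi (sg y + Pi.single k 1) ∈ suppFunctionals y := by
  refine phi_supp _ _ hy (fun j => ?_) (fun j => ?_)
  · by_cases h : j = k
    · subst h; simp [sg_zero y j hk]
    · simp [h, sg_le]
  · by_cases h : j = k
    · subst h; simp [hk]
    · simp [h, sg_mul]

lemma fr1 {V : Type*} [AddCommGroup V] [Module ℝ V] (A : Submodule ℝ V) (h : finrank ℝ A = 1) :
    ∃ v : A, v ≠ 0 ∧ ∀ w : A, ∃ c : ℝ, c • v = w := finrank_eq_one_iff'.1 h

lemma smooth_one (y : L13) (hy : ‖y‖ = 1)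
    (h : finrank ℝ (Submodule.span ℝ (suppFunctionals y)) = 1) (k : Fin 3) : y k ≠ 0 := by
  intro hk
  obtain ⟨v, -, hv⟩ := fr1 _ h
  obtain ⟨c, hc⟩ := hv ⟨_, Submodule.subset_span (sg_supp y hy)⟩
  obtain ⟨d, hd⟩ := hv ⟨_, Submodule.subset_span (sg_supp' y hy k hk)⟩
  have hc' : c • (v : L13 →L[ℝ] ℝ) = phi (sg y) := congrArg Subtype.val hc
  have hd' : d • (v : L13 →L[ℝ] ℝ) = phi (sg y + Pi.single k 1) := congrArg Subtype.val hd
  have e1 : c * (v : L13 →L[ℝ] ℝ) y = 1 := by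
    rw [← (sg_supp y hy).2, ← hc']; simp
  have e2 : d * (v : L13 →L[ℝ] ℝ) y = 1 := by
    rw [← (sg_supp' y hy k hk).2, ← hd']; simp
  have hv0 : (v : L13 →L[ℝ] ℝ) y ≠ 0 := fun h0 => by simp [h0] at e1
  have hcd : c = d := mul_right_cancel₀ hv0 (e1.trans e2.symm)
  rw [hcd, hd'] at hc'
  have := congrArg (fun f : L13 →L[ℝ] ℝ => f (bv k)) hc'
  simp [phi_bv] at this

lemma smooth_two_ex (y : L13) (hy : ‖y‖ = 1)
    (h : finrank ℝ (Submodule.span ℝ (suppFunctionals y)) = 2) : ∃ k, y k = 0 := by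
  by_contra! hk
  have hsub : suppFunctionals y ⊆ {phi (sg y)} := by
    intro f hf
    rw [mem_singleton_iff, exists_phi f]
    congr 1
    ext k
    have := supp_coord (fun k => f (bv k)) y hy (supp_bound (y := y) hf.1.le)
      (by rw [← exists_phi]; exact hf.2) k
    exact mul_right_cancel₀ (hk k) (this.trans (sg_mul y k).symm)
  have h1 := Submodule.finrank_mono (Submodule.span_mono (R := ℝ) hsub)
  have h2 := finrank_span_le_card (R := ℝ) ({phi (sg y)} : Set (L13 →L[ℝ] ℝ))
  simp at h2
  omega

lemma smooth_two_uniq (y : L13) (hy : ‖y‖ = 1)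
    (h : finrank ℝ (Submodule.span ℝ (suppFunctionals y)) = 2) (k l : Fin 3)
    (hk : y k = 0) (hl : y l = 0) : k = l := by
  by_contra hkl
  have hli : LinearIndependent ℝ
      ![phi (sg y), phi (sg y + Pi.single k 1), phi (sg y + Pi.single l 1)] := by
    rw [Fintype.linearIndependent_iff]
    intro c hc
    have key : ∀ z : L13, c 0 * phi (sg y) z + c 1 * phi (sg y + Pi.single k 1) z
        + c 2 * phi (sg y + Pi.single l 1) z = 0 := fun z => by
      have := congrArg (fun f : L13 →L[ℝ] ℝ => f z) hc
      simpa [Fin.sum_univ_three] using this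
    have hlk : ¬ l = k := fun h => hkl h.symm
    have k1 := key (bv k)
    have k2 := key (bv l)
    have k3 := key y
    rw [(sg_supp y hy).2, (sg_supp' y hy k hk).2, (sg_supp' y hy l hl).2] at k3
    simp [phi_bv, sg_zero y k hk, sg_zero y l hl, hkl, hlk] at k1 k2
    have k4 : c 0 = 0 := by linarith
    intro i
    fin_cases i <;> assumption
  have hsp : Submodule.span ℝ (Set.range
      ![phi (sg y), phi (sg y + Pi.single k 1), phi (sg y + Pi.single l 1)]) ≤
      Submodule.span ℝ (suppFunctionals y) := by
    refine Submodule.span_mono ?_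
    rintro _ ⟨i, rfl⟩
    fin_cases i
    · exact sg_supp y hy
    · exact sg_supp' y hy k hk
    · exact sg_supp' y hy l hl
  have h1 := Submodule.finrank_mono hsp
  rw [finrank_span_eq_card hli, h] at h1
  simp at h1

/-- elementary tensor functional -/
def ten (g : Fin 3 → ℝ) (x : Linf3) : (Linf3 →L[ℝ] L13) →L[ℝ] ℝ :=
  (phi g).comp (ContinuousLinearMap.apply ℝ L13 x)

lemma ten_apply (g : Fin 3 → ℝ) (x : Linf3) (S : Linf3 →L[ℝ] L13) :
    ten g x S = ∑ k, g k * (S x) k := by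
  simp [ten, phi_apply]

lemma ten_supp (T : Linf3 →L[ℝ] L13) (hT : ‖T‖ = 1) (g : Fin 3 → ℝ) (x : Linf3) (hx : ‖x‖ ≤ 1)
    (hg : phi g ∈ suppFunctionals (T x)) : ten g x ∈ suppFunctionals T := by
  refine supp_of_le T _ hT.le ?_ hg.2
  refine ContinuousLinearMap.opNorm_le_bound _ zero_le_one fun S => ?_
  calc ‖phi g (S x)‖ ≤ ‖phi g‖ * ‖S x‖ := (phi g).le_opNorm _
    _ = ‖S x‖ := by rw [hg.1, one_mul]
    _ ≤ ‖S‖ * ‖x‖ := S.le_opNorm x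
    _ ≤ ‖S‖ * 1 := by gcongr
    _ = 1 * ‖S‖ := by ring

lemma conv1 {E : Type*} [NormedAddCommGroup E] [NormedSpace ℝ E] (v w : E) (p : ℝ)
    (hp : |p| ≤ 1) (h1 : ‖v + w‖ ≤ 1) (h2 : ‖v - w‖ ≤ 1) : ‖v + p • w‖ ≤ 1 := by
  obtain ⟨ha, hb⟩ := abs_le.1 hp
  have : v + p • w = ((1 + p) / 2) • (v + w) + ((1 - p) / 2) • (v - w) := by module
  rw [this]
  refine (norm_add_le _ _).trans ?_
  rw [norm_smul, norm_smul, Real.norm_of_nonneg (by linarith), Real.norm_of_nonneg (by linarith)]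
  nlinarith

lemma box {E : Type*} [NormedAddCommGroup E] [NormedSpace ℝ E] (u v w : E)
    (e0 : ‖w + v + u‖ ≤ 1) (e1 : ‖w + v - u‖ ≤ 1) (e2 : ‖w - v - u‖ ≤ 1) (e3 : ‖w - v + u‖ ≤ 1) :
    ∀ p q r : ℝ, |p| ≤ 1 → |q| ≤ 1 → |r| ≤ 1 → ‖r • w + q • v + p • u‖ ≤ 1 := by
  have n0 : ‖-w - v - u‖ ≤ 1 := by
    rw [show -w - v - u = -(w + v + u) by abel, norm_neg]; exact e0
  have n1 : ‖-w - v + u‖ ≤ 1 := by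
    rw [show -w - v + u = -(w + v - u) by abel, norm_neg]; exact e1
  have n2 : ‖-w + v + u‖ ≤ 1 := by
    rw [show -w + v + u = -(w - v - u) by abel, norm_neg]; exact e2
  have n3 : ‖-w + v - u‖ ≤ 1 := by
    rw [show -w + v - u = -(w - v + u) by abel, norm_neg]; exact e3
  intro p q r hp hq hr
  have A : ‖w + v + p • u‖ ≤ 1 := conv1 _ _ _ hp e0 e1
  have B : ‖w - v + p • u‖ ≤ 1 := conv1 _ _ _ hp
    e3 e2
  have C : ‖-w + v + p • u‖ ≤ 1 := conv1 _ _ _ hp n2 n3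
  have D : ‖-w - v + p • u‖ ≤ 1 := conv1 _ _ _ hp n1 n0
  have A' : ‖(w + p • u) + q • v‖ ≤ 1 := conv1 _ _ _ hq
    (by convert A using 2; abel) (by convert B using 2; abel)
  have B' : ‖(-w + p • u) + q • v‖ ≤ 1 := conv1 _ _ _ hq
    (by convert C using 2; abel) (by convert D using 2; abel)
  have := conv1 (q • v + p • u) w r hr (by convert A' using 2; abel)
    (by convert B' using 2; abel)
  convert this using 2; abel

lemma op_le (S : Linf3 →L[ℝ] L13) (h : ∀ i, ‖S (XX i)‖ ≤ 1) : ‖S‖ ≤ 1 := by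
  set u := S ![1, 0, 0] with hu
  set v := S ![0, 1, 0] with hv
  set w := S ![0, 0, 1] with hw
  have hS : ∀ x : Linf3, S x = x 2 • w + x 1 • v + x 0 • u := fun x => by
    rw [hu, hv, hw, ← map_smul, ← map_smul, ← map_smul, ← map_add, ← map_add]
    congr 1
    ext j; fin_cases j <;> simp
  have e0 := h 0
  have e1 := h 1
  have e2 := h 2
  have e3 := h 3
  rw [hS] at e0 e1 e2 e3
  simp [XX, x₁, x₂, x₃, x₄] at e0 e1 e2 e3
  have main := box u v w e0 (by simpa [sub_eq_add_neg] using e1) (by simpa [sub_eq_add_neg] using e2)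
    (by simpa [sub_eq_add_neg] using e3)
  refine ContinuousLinearMap.opNorm_le_of_unit_norm zero_le_one fun x hx => ?_
  rw [hS]
  have hb : ∀ j, |x j| ≤ 1 := fun j => by
    have := norm_le_pi_norm x j
    rw [hx] at this
    exact this
  exact main _ _ _ (hb 0) (hb 1) (hb 2)

lemma XX_norm (i : Fin 4) : ‖XX i‖ ≤ 1 := by
  rw [pi_norm_le_iff_of_nonneg zero_le_one]
  intro j
  fin_cases i <;> fin_cases j <;> simp [XX, x₁, x₂, x₃, x₄]

lemma upper (T : Linf3 →L[ℝ] L13) (g : Fin 3 → ℝ) (hg : ∀ k, |g k| = 1)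
    (hTn : ∀ i, ‖T (XX i)‖ = 1)
    (hs : ∀ i, ∃ σ : ℝ, |σ| = 1 ∧ ∀ k, σ * g k * (T (XX i)) k = |(T (XX i)) k|)
    (S : Linf3 →L[ℝ] L13) (hS : ∀ x, ∑ k, g k * (S x) k = 0)
    (hz : ∀ i k, (T (XX i)) k = 0 → (S (XX i)) k = 0)
    (F : (Linf3 →L[ℝ] L13) →L[ℝ] ℝ) (hF : F ∈ suppFunctionals T) : F S ≤ 0 := by
  have hε : ∀ᶠ ε in nhdsWithin (0 : ℝ) (Ioi 0), 0 < ε ∧ ∀ i k, (T (XX i)) k ≠ 0 →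
      ε * |(S (XX i)) k| ≤ |(T (XX i)) k| := by
    refine (eventually_mem_nhdsWithin).and ?_
    rw [Filter.eventually_all]; intro i
    rw [Filter.eventually_all]; intro k
    by_cases h : (T (XX i)) k = 0
    · simp [h]
    have ht : Filter.Tendsto (fun ε : ℝ => ε * |(S (XX i)) k|) (nhdsWithin (0 : ℝ) (Ioi 0))
        (nhds (0 * |(S (XX i)) k|)) :=
      (Continuous.tendsto (by fun_prop) 0).mono_left nhdsWithin_le_nhds
    rw [zero_mul] at ht
    filter_upwards [ht.eventually (gt_mem_nhds (abs_pos.2 h))] with ε h1 _ using h1.le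
  obtain ⟨ε, hε0, hε⟩ := hε.exists
  have hn : ‖T + ε • S‖ ≤ 1 := by
    refine op_le _ fun i => ?_
    obtain ⟨σ, hσ, hσk⟩ := hs i
    have hk : ∀ k, |((T + ε • S) (XX i)) k|
        = |(T (XX i)) k| + ε * σ * (g k * (S (XX i)) k) := by
      intro k
      have e : ((T + ε • S) (XX i)) k = (T (XX i)) k + ε * (S (XX i)) k := by simp
      rw [e]
      by_cases h : (T (XX i)) k = 0
      · simp [h, hz i k h]
      have h1 := hε i k h
      have ha : |σ * g k| = 1 := by rw [abs_mul, hσ, hg k, one_mul]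
      have h2 : |(T (XX i)) k + ε * (S (XX i)) k|
          = |σ * g k * ((T (XX i)) k + ε * (S (XX i)) k)| := by rw [abs_mul, ha, one_mul]
      have h3 : |σ * g k * (ε * (S (XX i)) k)| = ε * |(S (XX i)) k| := by
        rw [abs_mul, ha, one_mul, abs_mul, abs_of_pos hε0]
      have h4 := neg_abs_le (σ * g k * (ε * (S (XX i)) k))
      rw [h2, abs_of_nonneg, mul_add, hσk k]
      · ring
      · rw [mul_add, hσk k]; linarith
    rw [l1norm, Finset.sum_congr rfl fun k _ => hk k, Finset.sum_add_distrib, ← Finset.mul_sum,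
      hS, ← l1norm, hTn]
    simp
  have h1 : F (T + ε • S) ≤ 1 := by
    refine (le_abs_self _).trans ((F.le_opNorm _).trans ?_)
    rw [hF.1, one_mul]; exact hn
  rw [map_add, map_smul, hF.2, smul_eq_mul] at h1
  by_contra! h
  nlinarith [mul_pos hε0 h]

lemma supp_neg {E : Type*} [NormedAddCommGroup E] [NormedSpace ℝ E] (y : E) :
    suppFunctionals (-y) = -suppFunctionals y := by
  ext f
  simp [suppFunctionals]

lemma Sk_card (T : Linf3 →L[ℝ] L13)
    (hMT : MTExt T = {x₁, -x₁, x₂, -x₂, x₃, -x₃, x₄, -x₄}) (n : ℕ) (h : (Sk T n).encard = 4) :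
    2 ≤ (Finset.univ.filter fun i : Fin 4 =>
      finrank ℝ (Submodule.span ℝ (suppFunctionals (T (XX i)))) = n).card := by
  set I := Finset.univ.filter fun i : Fin 4 =>
      finrank ℝ (Submodule.span ℝ (suppFunctionals (T (XX i)))) = n with hI
  have hsub : Sk T n ⊆ XX '' I ∪ (fun i => -XX i) '' I := by
    rintro x ⟨hx, hr⟩
    rw [hMT] at hx
    have : ∃ i, x = XX i ∨ x = - XX i := by
      rcases hx with h | h | h | h | h | h | h | h
      · exact ⟨0, Or.inl h⟩
      · exact ⟨0, Or.inr h⟩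
      · exact ⟨1, Or.inl h⟩
      · exact ⟨1, Or.inr h⟩
      · exact ⟨2, Or.inl h⟩
      · exact ⟨2, Or.inr h⟩
      · exact ⟨3, Or.inl h⟩
      · exact ⟨3, Or.inr h⟩
    obtain ⟨i, rfl | rfl⟩ := this
    · exact Or.inl ⟨i, by simpa [hI] using hr, rfl⟩
    · rw [map_neg, supp_neg, Submodule.span_neg] at hr
      exact Or.inr ⟨i, by simpa [hI] using hr, rfl⟩
  have h1 := (encard_le_encard hsub).trans (encard_union_le _ _)
  have h2 := add_le_add (encard_image_le XX (I : Set (Fin 4)))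
    (encard_image_le (fun i => -XX i) (I : Set (Fin 4)))
  have h3 := h1.trans h2
  rw [h, encard_coe_eq_coe_finsetCard] at h3
  have h4 : 4 ≤ I.card + I.card := by exact_mod_cast h3
  omega

lemma sep (c d : Fin 4) (h : c ≠ d) : ∃ u : Fin 3 → ℝ, ∑ j, u j * XX c j = 1 ∧
    ∑ j, u j * XX d j = 0 := by
  have hself : ∀ i, ∑ j, XX i j * XX i j = 3 := fun i => by
    fin_cases i <;> simp [XX, x₁, x₂, x₃, x₄, Fin.sum_univ_three] <;> norm_num
  have hne : (∑ j, XX c j * XX d j) ^ 2 = 1 := by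
    fin_cases c <;> fin_cases d <;>
      first
      | exact absurd rfl h
      | simp [XX, x₁, x₂, x₃, x₄, Fin.sum_univ_three]
  have h1 := hself c
  have h2 := hself d
  refine ⟨fun j => (3 * XX c j - (∑ j, XX c j * XX d j) * XX d j) / 8, ?_, ?_⟩
  · simp only [Fin.sum_univ_three] at *
    linear_combination (3 / 8) * h1 - (1 / 8) * hne
  · simp only [Fin.sum_univ_three] at *
    linear_combination - (1 / 8) * (XX c 0 * XX d 0 + XX c 1 * XX d 1 + XX c 2 * XX d 2) * h2

/-- rank one operator -/
def rk (u v : Fin 3 → ℝ) : Linf3 →L[ℝ] L13 :=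
  (∑ j, u j • (ContinuousLinearMap.proj j : Linf3 →L[ℝ] ℝ)).smulRight (WithLp.toLp 1 v)

lemma rk_apply (u v : Fin 3 → ℝ) (x : Linf3) (k : Fin 3) :
    (rk u v x) k = (∑ j, u j * x j) * v k := by
  simp [rk]

lemma ten_rk (g u v : Fin 3 → ℝ) (x : Linf3) :
    ten g x (rk u v) = (∑ j, u j * x j) * ∑ k, g k * v k := by
  rw [ten_apply, Finset.mul_sum]
  exact Finset.sum_congr rfl fun k _ => by rw [rk_apply]; ring

/-- the five functionals -/
def fam (g : Fin 3 → ℝ) (c d : Fin 4) (k l : Fin 3) : Fin 5 → ((Linf3 →L[ℝ] L13) →L[ℝ] ℝ) :=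
  ![ten g (Pi.single 0 1), ten g (Pi.single 1 1), ten g (Pi.single 2 1),
    ten (Pi.single k 1) (XX c), ten (Pi.single l 1) (XX d)]

lemma li5 {V : Type*} [AddCommGroup V] [Module ℝ V] (f : Fin 5 → V)
    (h : ∀ a : Fin 5 → ℝ, ∑ i, a i • f i = 0 → ∀ i, a i = 0) : LinearIndependent ℝ f :=
  Fintype.linearIndependent_iff.2 h

set_option maxHeartbeats 2000000 in
lemma fam_li (g : Fin 3 → ℝ) (hg : ∀ k, |g k| = 1) (c d : Fin 4) (hcd : c ≠ d) (k l : Fin 3) :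
    LinearIndependent ℝ (fam g c d k l) := by
  have hg2 : ∀ k, g k * g k = 1 := fun k => by rw [← abs_mul_abs_self, hg k, one_mul]
  have hgg : ∑ k, g k * g k = 3 := by simp [hg2]
  have hgv : ∀ m, ∑ k, g k * ((3 * g m) • Pi.single m 1 - g : Fin 3 → ℝ) k = 0 := fun m => by
    simp only [Pi.sub_apply, Pi.smul_apply, mul_sub, Finset.sum_sub_distrib, hgg]
    simp [Pi.single_apply]
    linear_combination 3 * hg2 m
  have hmv : ∀ m, ∑ k, (Pi.single m 1 : Fin 3 → ℝ) k *
      ((3 * g m) • Pi.single m 1 - g : Fin 3 → ℝ) k = 2 * g m := fun m => by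
    simp [Pi.single_apply]
    ring
  have hg0 : ∀ m, g m ≠ 0 := fun m h => by simpa [h] using hg2 m
  refine li5 (V := (Linf3 →L[ℝ] L13) →L[ℝ] ℝ) (fam g c d k l) ?_
  intro a ha
  have key : ∀ u v, a 0 * ten g (Pi.single 0 1) (rk u v) + a 1 * ten g (Pi.single 1 1) (rk u v)
      + a 2 * ten g (Pi.single 2 1) (rk u v) + a 3 * ten (Pi.single k 1) (XX c) (rk u v)
      + a 4 * ten (Pi.single l 1) (XX d) (rk u v) = 0 := fun u v => by
    have := congrArg (fun f : (Linf3 →L[ℝ] L13) →L[ℝ] ℝ => f (rk u v)) ha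
    simpa [Fin.sum_univ_five, fam] using this
  obtain ⟨u, hu1, hu2⟩ := sep c d hcd
  obtain ⟨w, hw1, hw2⟩ := sep d c hcd.symm
  have a3 : a 3 = 0 := by
    have := key u ((3 * g k) • Pi.single k 1 - g)
    simp only [ten_rk, hgv, hmv, hu1, hu2] at this
    simpa [hg0] using this
  have a4 : a 4 = 0 := by
    have := key w ((3 * g l) • Pi.single l 1 - g)
    simp only [ten_rk, hgv, hmv, hw1, hw2] at this
    simpa [hg0] using this
  have a0 : a 0 = 0 := by
    have := key (Pi.single 0 1) g
    simp only [ten_rk, hgg, a3, a4] at this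
    simpa [Fin.sum_univ_three] using this
  have a1 : a 1 = 0 := by
    have := key (Pi.single 1 1) g
    simp only [ten_rk, hgg, a3, a4] at this
    simpa [Fin.sum_univ_three] using this
  have a2 : a 2 = 0 := by
    have := key (Pi.single 2 1) g
    simp only [ten_rk, hgg, a3, a4] at this
    simpa [Fin.sum_univ_three] using this
  intro i
  fin_cases i <;> assumption

theorem stmt_13
    (T : Linf3 →L[ℝ] L13) (hT : ‖T‖ = 1)
    (hMT : MTExt T = {x₁, -x₁, x₂, -x₂, x₃, -x₃, x₄, -x₄})
    (h1 : (Sk T 1).encard = 4) (h2 : (Sk T 2).encard = 4)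
    (h3 : (Sk T 3).encard = 0)
    (hJ : ∀ xi ∈ Sk T 1, ∀ xj ∈ Sk T 1,
      pm (suppFunctionals (T xi)) = pm (suppFunctionals (T xj)))
    (hJ' : ∀ xi ∈ Sk T 1, ∀ xk ∈ Sk T 2,
      pm (suppFunctionals (T xi)) ⊆ pm (extremePoints ℝ (suppFunctionals (T xk))))
    :
    finrank ℝ (Submodule.span ℝ (suppFunctionals T)) = 5 := by
  have hTn : ∀ i, ‖T (XX i)‖ = 1 := by
    intro i
    have hm : XX i ∈ MTExt T := by
      rw [hMT]; fin_cases i <;> simp [XX]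
    rw [← hT]; exact hm.1.2
  have hmem : ∀ i n, finrank ℝ (Submodule.span ℝ (suppFunctionals (T (XX i)))) = n →
      XX i ∈ Sk T n := by
    intro i n h
    refine ⟨?_, h⟩
    rw [hMT]; fin_cases i <;> simp [XX]
  have c1 := Sk_card T hMT 1 h1
  have c2 := Sk_card T hMT 2 h2
  set I := Finset.univ.filter fun i : Fin 4 =>
      finrank ℝ (Submodule.span ℝ (suppFunctionals (T (XX i)))) = 1 with hI
  set K := Finset.univ.filter fun i : Fin 4 =>
      finrank ℝ (Submodule.span ℝ (suppFunctionals (T (XX i)))) = 2 with hK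
  have hdis : Disjoint I K := by
    rw [Finset.disjoint_left]
    intro i hi hk
    simp [hI, hK] at hi hk
    omega
  have hcu := Finset.card_union_of_disjoint hdis
  have hcle := Finset.card_le_univ (I ∪ K)
  simp only [Fintype.card_fin] at hcle
  have hK2 : K.card = 2 := by omega
  have huniv : I ∪ K = Finset.univ := Finset.card_eq_iff_eq_univ _ |>.1 (by simp; omega)
  obtain ⟨c, d, hcd, hKcd⟩ := Finset.card_eq_two.1 hK2
  obtain ⟨a, ha⟩ : I.Nonempty := Finset.card_pos.1 (by omega)
  have ha1 : finrank ℝ (Submodule.span ℝ (suppFunctionals (T (XX a)))) = 1 := by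
    simpa [hI] using ha
  have hc2 : finrank ℝ (Submodule.span ℝ (suppFunctionals (T (XX c)))) = 2 := by
    have : c ∈ K := by simp [hKcd]
    simpa [hK] using this
  have hd2 : finrank ℝ (Submodule.span ℝ (suppFunctionals (T (XX d)))) = 2 := by
    have : d ∈ K := by simp [hKcd]
    simpa [hK] using this
  have hcases : ∀ i, finrank ℝ (Submodule.span ℝ (suppFunctionals (T (XX i)))) = 1 ∨
      i = c ∨ i = d := by
    intro i
    have : i ∈ I ∪ K := by rw [huniv]; simp
    rcases Finset.mem_union.1 this with h | h
    · left; simpa [hI] using h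
    · right; simpa [hKcd] using h
  obtain ⟨k, hk⟩ := smooth_two_ex _ (hTn c) hc2
  obtain ⟨l, hl⟩ := smooth_two_ex _ (hTn d) hd2
  set g := sg (T (XX a)) with hgdef
  have hg : ∀ k, |g k| = 1 := fun k => sg_abs _ _ (smooth_one _ (hTn a) ha1 k)
  have hga : phi g ∈ pm (suppFunctionals (T (XX a))) := Or.inl (sg_supp _ (hTn a))
  have hpm : ∀ i, phi g ∈ pm (suppFunctionals (T (XX i))) := by
    have h2' : ∀ i, finrank ℝ (Submodule.span ℝ (suppFunctionals (T (XX i)))) = 2 →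
        phi g ∈ pm (suppFunctionals (T (XX i))) := by
      intro i hi
      rcases hJ' _ (hmem a 1 ha1) _ (hmem i 2 hi) hga with h | h
      · exact Or.inl (extremePoints_subset h)
      · exact Or.inr ((extremePoints_subset (mem_neg.1 h) : -phi g ∈ _))
    intro i
    rcases hcases i with h | rfl | rfl
    · rw [← hJ _ (hmem a 1 ha1) _ (hmem i 1 h)]; exact hga
    · exact h2' _ hc2
    · exact h2' _ hd2
  have hs : ∀ i, ∃ σ : ℝ, |σ| = 1 ∧ ∀ k, σ * g k * (T (XX i)) k = |(T (XX i)) k| := by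
    intro i
    rcases hpm i with h | h
    · refine ⟨1, by simp, fun k => ?_⟩
      rw [one_mul]
      exact supp_coord g _ (hTn i) (fun k => (hg k).le) h.2 k
    · refine ⟨-1, by simp, fun k => ?_⟩
      have hh : phi (fun k => -1 * g k) (T (XX i)) = 1 := by
        have h' : (-phi g) (T (XX i)) = 1 := (mem_neg.1 h).2
        rw [phi_apply]
        rw [neg_apply, phi_apply] at h'
        simpa using h'
      exact supp_coord (fun k => -1 * g k) _ (hTn i) (fun k => by simp [hg k]) hh k
  set W := Submodule.span ℝ (suppFunctionals T) with hW
  have hXW : ∀ i, ten g (XX i) ∈ W := by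
    intro i
    obtain ⟨σ, hσ, hσk⟩ := hs i
    have hσ2 : σ * σ = 1 := by rw [← abs_mul_abs_self, hσ, one_mul]
    have h0 : ten (fun k => σ * g k) (XX i) ∈ W := Submodule.subset_span
      (ten_supp T hT _ _ (XX_norm i)
        (phi_supp _ _ (hTn i) (fun k => by rw [abs_mul, hσ, hg k, one_mul]) hσk))
    have h1 := W.smul_mem σ h0
    convert h1 using 1
    ext S
    simp only [_root_.smul_apply, smul_eq_mul, ten_apply, Finset.mul_sum]
    refine Finset.sum_congr rfl fun k _ => ?_
    linear_combination (- g k * (S (XX i)) k) * hσ2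
  have hzW : ∀ i m, (T (XX i)) m = 0 → ten (Pi.single m 1) (XX i) ∈ W := by
    intro i m hm
    have h0 := Submodule.subset_span (R := ℝ) (ten_supp T hT _ _ (XX_norm i) (sg_supp _ (hTn i)))
    have h1 := Submodule.subset_span (R := ℝ)
      (ten_supp T hT _ _ (XX_norm i) (sg_supp' _ (hTn i) m hm))
    have h2 := W.sub_mem h1 h0
    convert h2 using 1
    ext S
    simp only [_root_.sub_apply, ten_apply, ← Finset.sum_sub_distrib, Pi.add_apply]
    exact Finset.sum_congr rfl fun k _ => by ring
  have hlin : ∀ (x y : Linf3) (p q : ℝ), ten g (p • x + q • y) = p • ten g x + q • ten g y := by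
    intro x y p q
    ext S
    simp [ten]
  have heq : W = Submodule.span ℝ (Set.range (fam g c d k l)) := by
    apply le_antisymm
    · refine Submodule.span_le.2 fun F hF => ?_
      have hker : ∀ S, (∀ i, fam g c d k l i S = 0) → F S = 0 := by
        intro S hS
        have s0 : ten g (Pi.single 0 1) S = 0 := hS 0
        have s1 : ten g (Pi.single 1 1) S = 0 := hS 1
        have s2 : ten g (Pi.single 2 1) S = 0 := hS 2
        have s3 : ten (Pi.single k 1) (XX c) S = 0 := hS 3
        have s4 : ten (Pi.single l 1) (XX d) S = 0 := hS 4
        have hSx : ∀ x, ∑ k, g k * (S x) k = 0 := by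
          intro x
          have hx : x = (1 : ℝ) • (x 0 • Pi.single 0 1 + x 1 • Pi.single 1 1)
              + x 2 • Pi.single 2 1 := by
            ext j; fin_cases j <;> simp
          rw [← ten_apply, hx, hlin, hlin]
          simp [s0, s1, s2]
        have hz : ∀ i k, (T (XX i)) k = 0 → (S (XX i)) k = 0 := by
          intro i m hm
          rcases hcases i with h | rfl | rfl
          · exact absurd hm (smooth_one _ (hTn i) h m)
          · rw [smooth_two_uniq _ (hTn _) hc2 m k hm hk]
            simpa [ten_apply, Pi.single_apply] using s3
          · rw [smooth_two_uniq _ (hTn _) hd2 m l hm hl]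
            simpa [ten_apply, Pi.single_apply] using s4
        have u1 := upper T g hg hTn hs S hSx hz F hF
        have u2 := upper T g hg hTn hs (-S) (fun x => by simpa using hSx x)
          (fun i k h => by simpa using hz i k h) F hF
        rw [map_neg] at u2
        linarith
      let e : ((Linf3 →L[ℝ] L13) →L[ℝ] ℝ) →ₗ[ℝ] ((Linf3 →L[ℝ] L13) →ₗ[ℝ] ℝ) :=
        ContinuousLinearMap.coeLM ℝ
      have he : Function.Injective e := ContinuousLinearMap.coe_injective
      have h5 : e F ∈ Submodule.span ℝ (Set.range fun i => e (fam g c d k l i)) := by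
        apply mem_span_of_iInf_ker_le_ker
        intro S hS
        simp only [Submodule.mem_iInf, LinearMap.mem_ker] at hS ⊢
        exact hker S hS
      have h6 : (Set.range fun i => e (fam g c d k l i)) = e '' Set.range (fam g c d k l) := by
        rw [← Set.range_comp]; rfl
      rw [h6, Submodule.span_image] at h5
      obtain ⟨F', hF', hFF⟩ := h5
      rw [← he hFF]
      exact hF'
    · refine Submodule.span_le.2 ?_
      rintro _ ⟨i, rfl⟩
      fin_cases i
      · have : (Pi.single 0 1 : Linf3) = (1 / 2 : ℝ) • XX 0 + (-1 / 2 : ℝ) • XX 1 := by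
          ext j; fin_cases j <;> simp [XX, x₁, x₂] <;> norm_num
        change ten g (Pi.single 0 1) ∈ W
        rw [this, hlin]
        exact W.add_mem (W.smul_mem _ (hXW _)) (W.smul_mem _ (hXW _))
      · have : (Pi.single 1 1 : Linf3) = (1 / 2 : ℝ) • XX 1 + (-1 / 2 : ℝ) • XX 2 := by
          ext j; fin_cases j <;> simp [XX, x₃, x₂] <;> norm_num
        change ten g (Pi.single 1 1) ∈ W
        rw [this, hlin]
        exact W.add_mem (W.smul_mem _ (hXW _)) (W.smul_mem _ (hXW _))
      · have : (Pi.single 2 1 : Linf3) = (1 / 2 : ℝ) • XX 0 + (1 / 2 : ℝ) • XX 2 := by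
          ext j; fin_cases j <;> simp [XX, x₁, x₃] <;> norm_num
        change ten g (Pi.single 2 1) ∈ W
        rw [this, hlin]
        exact W.add_mem (W.smul_mem _ (hXW _)) (W.smul_mem _ (hXW _))
      · exact hzW c k hk
      · exact hzW d l hl
  rw [heq, finrank_span_eq_card (fam_li g hg c d hcd k l)]
  simp
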